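/- Let G be a finite simple graph with vertex set V, let k be a positive integer, let T ⊆ V satisfy |Γ_T(Z)| ≥ k − 1 for every Steiner T-cut Z, and fix r ∈ T. Let D be the family of demand cuts, i.e., Steiner (T,r)-cuts X with |Γ_T(X)| = k − 1. For every min-core Z, the core family C(Z) is a ring family: for all X, Y ∈ C(Z), both X ∩ Y and X ∪ Y belong to C(Z). -/

import Mathlib

/-- `nbr G X` is Γ(X): the set of vertices outside `X` adjacent to a vertex of `X`. -/
def nbr {V : Type*} [Fintype V] [DecidableEq V] (G : SimpleGraph V) [DecidableRel G.Adj]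
    (X : Finset V) : Finset V :=
  Finset.univ.filter (fun v => v ∉ X ∧ ∃ u ∈ X, G.Adj u v)

/-- `cl G X` is X⁺ = X ∪ Γ(X). -/
def cl {V : Type*} [Fintype V] [DecidableEq V] (G : SimpleGraph V) [DecidableRel G.Adj]
    (X : Finset V) : Finset V :=
  X ∪ nbr G X

/-- A demand cut: a Steiner (T,r)-cut X with |Γ_T(X)| = k - 1. -/
def IsDemand {V : Type*} [Fintype V] [DecidableEq V] (G : SimpleGraph V) [DecidableRel G.Adj]
    (T : Finset V) (k : ℕ) (r : V) (X : Finset V) : Prop :=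
  (X ∩ T).Nonempty ∧ (T \ cl G X).Nonempty ∧ r ∉ cl G X ∧ (nbr G X ∩ T).card = k - 1

/-- A min-core: a minimal demand cut. -/
def IsMinCore {V : Type*} [Fintype V] [DecidableEq V] (G : SimpleGraph V) [DecidableRel G.Adj]
    (T : Finset V) (k : ℕ) (r : V) (X : Finset V) : Prop :=
  IsDemand G T k r X ∧ ∀ Y : Finset V, IsDemand G T k r Y → Y ⊆ X → Y = X

/-- A core: a demand cut containing exactly one min-core as a subset. -/
def IsCore {V : Type*} [Fintype V] [DecidableEq V] (G : SimpleGraph V) [DecidableRel G.Adj]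
    (T : Finset V) (k : ℕ) (r : V) (X : Finset V) : Prop :=
  IsDemand G T k r X ∧ ∃! Z : Finset V, IsMinCore G T k r Z ∧ Z ⊆ X

/-- The core family C(Z) of a min-core Z: the cores containing Z. -/
def coreFam {V : Type*} [Fintype V] [DecidableEq V] (G : SimpleGraph V) [DecidableRel G.Adj]
    (T : Finset V) (k : ℕ) (r : V) (Z : Finset V) : Set (Finset V) :=
  {X | IsCore G T k r X ∧ Z ⊆ X}

/-!
If demand cuts `X` and `Y` share a terminal, then `X ∩ Y` and `X ∪ Y` each have at least `k - 1`
terminal neighbours, and by submodularity of `X ↦ |Γ_T(X)|` at most `2 (k - 1)` together, so both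
are demand cuts. By minimality, a min-core sharing a terminal with a demand cut is therefore
contained in it. A min-core inside `X ∪ Y` contains a terminal, which lies in `X` or in `Y`, so the
min-core is itself contained in `X` or in `Y`: no new min-core can appear in the union.
-/

open Finset

section Neighborhood

variable {V : Type*} [Fintype V] [DecidableEq V] {G : SimpleGraph V} [DecidableRel G.Adj]
  {A B : Finset V} {v : V}

theorem mem_nbr : v ∈ nbr G A ↔ v ∉ A ∧ ∃ u ∈ A, G.Adj u v := by
  simp [nbr]

theorem mem_cl : v ∈ cl G A ↔ v ∈ A ∨ ∃ u ∈ A, G.Adj u v := by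
  simp only [cl, mem_union, mem_nbr]
  tauto

theorem cl_mono (h : A ⊆ B) : cl G A ⊆ cl G B := fun v hv =>
  mem_cl.2 <| (mem_cl.1 hv).imp (@h v) fun ⟨u, hu, huv⟩ => ⟨u, h hu, huv⟩

variable (G A B)

theorem cl_union : cl G (A ∪ B) = cl G A ∪ cl G B := by
  ext v
  simp only [mem_union, mem_cl, or_and_right, exists_or, or_or_or_comm]

theorem nbr_inter_union_nbr_union_subset :
    nbr G (A ∩ B) ∪ nbr G (A ∪ B) ⊆ nbr G A ∪ nbr G B := by
  intro v
  simp only [mem_union, mem_inter, mem_nbr]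
  grind

theorem nbr_inter_inter_nbr_union_subset :
    nbr G (A ∩ B) ∩ nbr G (A ∪ B) ⊆ nbr G A ∩ nbr G B := by
  intro v
  simp only [mem_union, mem_inter, mem_nbr]
  grind

theorem card_nbr_inter_submodular (T : Finset V) :
    #(nbr G (A ∩ B) ∩ T) + #(nbr G (A ∪ B) ∩ T) ≤ #(nbr G A ∩ T) + #(nbr G B ∩ T) := by
  rw [← card_union_add_card_inter, ← card_union_add_card_inter (nbr G A ∩ T),
    ← union_inter_distrib_right, ← union_inter_distrib_right,
    ← inter_inter_distrib_right, ← inter_inter_distrib_right]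
  exact Nat.add_le_add
    (card_le_card (inter_subset_inter_right (nbr_inter_union_nbr_union_subset G A B)))
    (card_le_card (inter_subset_inter_right (nbr_inter_inter_nbr_union_subset G A B)))

end Neighborhood

section Cores

variable {V : Type*} [Fintype V] [DecidableEq V] {G : SimpleGraph V} [DecidableRel G.Adj]
  {T : Finset V} {k : ℕ} {r : V} {X Y W : Finset V}

variable (G T k r) in
/-- Rooted connectivity: every set that meets `T` and whose closure avoids the root `r` has at
least `k - 1` neighbours in `T`. For `r ∈ T` these sets are exactly the Steiner `(T, r)`-cuts, so
this bounds fewer sets than the condition on all Steiner `T`-cuts. -/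
def IsRootedConnected : Prop :=
  ∀ X : Finset V, (X ∩ T).Nonempty → r ∉ cl G X → k - 1 ≤ #(nbr G X ∩ T)

theorem isDemand_iff_of_root_mem (hr : r ∈ T) :
    IsDemand G T k r X ↔ (X ∩ T).Nonempty ∧ r ∉ cl G X ∧ #(nbr G X ∩ T) = k - 1 :=
  and_congr_right fun _ => and_iff_right_of_imp fun h => ⟨r, mem_sdiff.2 ⟨hr, h.1⟩⟩

theorem isMinCore_iff_minimal : IsMinCore G T k r W ↔ Minimal (IsDemand G T k r) W := by
  rw [minimal_iff]
  simp only [IsMinCore, eq_comm]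

theorem IsDemand.exists_isMinCore_subset (hX : IsDemand G T k r X) :
    ∃ W, IsMinCore G T k r W ∧ W ⊆ X := by
  obtain ⟨W, hWX, hW⟩ := exists_minimal_le_of_wellFoundedLT (IsDemand G T k r) X hX
  exact ⟨W, isMinCore_iff_minimal.2 hW, hWX⟩

theorem IsDemand.inter_and_union (hconn : IsRootedConnected G T k r) (hr : r ∈ T)
    (hX : IsDemand G T k r X) (hY : IsDemand G T k r Y) (hXY : (X ∩ Y ∩ T).Nonempty) :
    IsDemand G T k r (X ∩ Y) ∧ IsDemand G T k r (X ∪ Y) := by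
  rw [isDemand_iff_of_root_mem hr] at hX hY
  obtain ⟨hXT, hrX, hcardX⟩ := hX
  obtain ⟨-, hrY, hcardY⟩ := hY
  have hr_inter : r ∉ cl G (X ∩ Y) := fun h => hrX (cl_mono inter_subset_left h)
  have hr_union : r ∉ cl G (X ∪ Y) := by simp [cl_union, hrX, hrY]
  have hT_union : ((X ∪ Y) ∩ T).Nonempty := hXT.mono (by gcongr; exact subset_union_left)
  have hcard_inter := hconn _ hXY hr_inter
  have hcard_union := hconn _ hT_union hr_union
  have hsubmod := card_nbr_inter_submodular G X Y T
  rw [isDemand_iff_of_root_mem hr, isDemand_iff_of_root_mem hr]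
  exact ⟨⟨hXY, hr_inter, by lia⟩, hT_union, hr_union, by lia⟩

theorem IsMinCore.subset_of_inter_nonempty (hconn : IsRootedConnected G T k r) (hr : r ∈ T)
    (hW : IsMinCore G T k r W) (hX : IsDemand G T k r X) (hWX : (W ∩ X ∩ T).Nonempty) :
    W ⊆ X :=
  inter_eq_left.1 <|
    hW.2 _ (hW.1.inter_and_union hconn hr hX hWX).1 inter_subset_left

theorem IsMinCore.subset_or_subset_of_subset_union (hconn : IsRootedConnected G T k r)
    (hr : r ∈ T) (hW : IsMinCore G T k r W) (hX : IsDemand G T k r X)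
    (hY : IsDemand G T k r Y) (hWXY : W ⊆ X ∪ Y) : W ⊆ X ∨ W ⊆ Y := by
  obtain ⟨t, ht⟩ := hW.1.1
  obtain ⟨htW, htT⟩ := mem_inter.1 ht
  refine (mem_union.1 (hWXY htW)).imp (fun htX => ?_) (fun htY => ?_)
  · exact hW.subset_of_inter_nonempty hconn hr hX ⟨t, by simp [htW, htX, htT]⟩
  · exact hW.subset_of_inter_nonempty hconn hr hY ⟨t, by simp [htW, htY, htT]⟩

theorem IsCore.of_isDemand_subset (hX : IsCore G T k r X) (hY : IsDemand G T k r Y)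
    (hYX : Y ⊆ X) : IsCore G T k r Y := by
  obtain ⟨W, hW, hWY⟩ := hY.exists_isMinCore_subset
  exact ⟨hY, W, ⟨hW, hWY⟩, fun W' ⟨hW', hW'Y⟩ =>
    hX.2.unique ⟨hW', hW'Y.trans hYX⟩ ⟨hW, hWY.trans hYX⟩⟩

theorem IsCore.inter (hconn : IsRootedConnected G T k r) (hr : r ∈ T)
    (hX : IsCore G T k r X) (hY : IsDemand G T k r Y) (hXY : (X ∩ Y ∩ T).Nonempty) :
    IsCore G T k r (X ∩ Y) :=
  hX.of_isDemand_subset (hX.1.inter_and_union hconn hr hY hXY).1 inter_subset_left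

theorem IsCore.union (hconn : IsRootedConnected G T k r) (hr : r ∈ T)
    (hX : IsCore G T k r X) (hY : IsCore G T k r Y) (hXY : (X ∩ Y ∩ T).Nonempty) :
    IsCore G T k r (X ∪ Y) := by
  obtain ⟨hinter, hunion⟩ := hX.1.inter_and_union hconn hr hY.1 hXY
  obtain ⟨W, hW, hWXY⟩ := hinter.exists_isMinCore_subset
  obtain ⟨hWX, hWY⟩ := subset_inter_iff.1 hWXY
  refine ⟨hunion, W, ⟨hW, hWX.trans subset_union_left⟩, fun W' ⟨hW', hW'XY⟩ => ?_⟩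
  rcases hW'.subset_or_subset_of_subset_union hconn hr hX.1 hY.1 hW'XY with hW'X | hW'Y
  · exact hX.2.unique ⟨hW', hW'X⟩ ⟨hW, hWX⟩
  · exact hY.2.unique ⟨hW', hW'Y⟩ ⟨hW, hWY⟩

end Cores

theorem stmt_8_general {V : Type*} [Fintype V] [DecidableEq V]
    (G : SimpleGraph V) [DecidableRel G.Adj] (k : ℕ) (T : Finset V) (r : V)
    (hconn : IsRootedConnected G T k r) (hr : r ∈ T)
    (Z : Finset V) (hZ : (Z ∩ T).Nonempty)
    (X Y : Finset V) (hX : X ∈ coreFam G T k r Z) (hY : Y ∈ coreFam G T k r Z) :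
    X ∩ Y ∈ coreFam G T k r Z ∧ X ∪ Y ∈ coreFam G T k r Z := by
  obtain ⟨hXcore, hZX⟩ := hX
  obtain ⟨hYcore, hZY⟩ := hY
  have hZXY : Z ⊆ X ∩ Y := subset_inter hZX hZY
  have hXY : (X ∩ Y ∩ T).Nonempty := hZ.mono (inter_subset_inter_right hZXY)
  exact ⟨⟨hXcore.inter hconn hr hYcore.1 hXY, hZXY⟩,
    ⟨hXcore.union hconn hr hYcore hXY, hZX.trans subset_union_left⟩⟩

theorem stmt_8 {V : Type*} [Fintype V] [DecidableEq V]
    (G : SimpleGraph V) [DecidableRel G.Adj] (k : ℕ) (hk : 1 ≤ k)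
    (T : Finset V)
    -- |Γ_T(Z)| ≥ k-1 for every Steiner T-cut Z
    (hTconn : ∀ Z : Finset V, (Z ∩ T).Nonempty → (T \ cl G Z).Nonempty →
      k - 1 ≤ (nbr G Z ∩ T).card)
    (r : V) (hr : r ∈ T)
    (Z : Finset V) (hZ : IsMinCore G T k r Z)
    (X Y : Finset V) (hX : X ∈ coreFam G T k r Z) (hY : Y ∈ coreFam G T k r Z) :
    X ∩ Y ∈ coreFam G T k r Z ∧ X ∪ Y ∈ coreFam G T k r Z :=
  stmt_8_general G k T r (fun W hWT hrW => hTconn W hWT ⟨r, mem_sdiff.2 ⟨hr, hrW⟩⟩) hr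
    Z hZ.1.1 X Y hX hY
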